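/- Let 𝒞 be a root class of groups. Then the free product G₁ * G₂ of two groups that are each residually a 𝒞-group is residually a 𝒞-group. -/

import Mathlib

universe u

/-- A class of groups: a predicate on groups. -/
def GClass : Type (u + 1) := ∀ (G : Type u) [Group G], Prop

/-- Closure under isomorphism. -/
def ClosedIso (C : GClass.{u}) : Prop :=
  ∀ (G H : Type u) [Group G] [Group H], (G ≃* H) → C G → C H

/-- Closure under taking subgroups. -/
def ClosedSub (C : GClass.{u}) : Prop :=
  ∀ (G : Type u) [Group G] (H : Subgroup G), C G → C H

/-- Closure under extensions. -/
def ClosedExt (C : GClass.{u}) : Prop :=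
  ∀ (G : Type u) [Group G] (N : Subgroup G) [N.Normal], C N → C (G ⧸ N) → C G

/-- Closure under unrestricted direct powers ∏_{y ∈ Y} X with X, Y ∈ C. -/
def ClosedPow (C : GClass.{u}) : Prop :=
  ∀ (X Y : Type u) [Group X] [Group Y], C X → C Y → C (Y → X)

/-- A root class of groups. -/
def IsRootClass (C : GClass.{u}) : Prop :=
  (∃ (G : Type u) (_ : Group G), C G ∧ Nontrivial G) ∧
    ClosedIso C ∧ ClosedSub C ∧ ClosedExt C ∧ ClosedPow C

/-- `G` is residually a `C`-group. -/
def Residually (C : GClass.{u}) (G : Type u) [Group G] : Prop :=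
  ∀ g : G, g ≠ 1 → ∃ (Q : Type u) (_ : Group Q) (σ : G →* Q),
    C Q ∧ Function.Surjective σ ∧ σ g ≠ 1

section helpers

open Monoid

variable {C : GClass.{u}}

lemma IsRootClass.of_injective (hC : IsRootClass C) {G H : Type u} [Group G] [Group H]
    (f : G →* H) (hf : Function.Injective f) (hH : C H) : C G :=
  hC.2.1 _ _ (MonoidHom.ofInjective hf).symm (hC.2.2.1 H f.range hH)

lemma IsRootClass.of_ker (hC : IsRootClass C) {G Q M : Type u} [Group G] [Group Q] [Group M]
    (f : G →* Q) (hQ : C Q) (hM : C M) (g : f.ker →* M) (hg : Function.Injective g) : C G := by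
  refine hC.2.2.2.1 G f.ker (hC.of_injective g hg hM) ?_
  exact hC.of_injective (QuotientGroup.kerLift f) (QuotientGroup.kerLift_injective f) hQ

lemma IsRootClass.prod (hC : IsRootClass C) {A B : Type u} [Group A] [Group B]
    (hA : C A) (hB : C B) : C (A × B) := by
  refine hC.of_ker (MonoidHom.fst A B) hA hB ((MonoidHom.snd A B).comp (Subgroup.subtype _)) ?_
  rintro ⟨⟨a, b⟩, h⟩ ⟨⟨a', b'⟩, h'⟩ hh
  have e : a = 1 := h
  have e' : a' = 1 := h'
  have e2 : b = b' := hh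
  subst e e' e2
  rfl

/-- The unrestricted wreath product. -/
abbrev Wr (X P : Type u) [Group X] [Group P] : Type u :=
  SemidirectProduct (P → X) P (mulAutArrow (G := P) (A := P) (M := X))

lemma IsRootClass.wr (hC : IsRootClass C) {X P : Type u} [Group X] [Group P]
    (hX : C X) (hP : C P) : C (Wr X P) := by
  have hM : C (P → X) := hC.2.2.2.2 X P hX hP
  let g : (SemidirectProduct.rightHom : Wr X P →* P).ker →* (P → X) :=
    { toFun := fun w => w.1.left
      map_one' := rfl
      map_mul' := by
        rintro ⟨a, ha⟩ ⟨b, hb⟩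
        have : a.right = 1 := ha
        simp [this] }
  refine hC.of_ker SemidirectProduct.rightHom hP hM g ?_
  rintro ⟨a, ha⟩ ⟨b, hb⟩ hh
  have h1 : a.right = 1 := ha
  have h2 : b.right = 1 := hb
  apply Subtype.ext
  exact SemidirectProduct.ext hh (h1.trans h2.symm)

/-- `g` survives in some `C`-group. -/
def Surv (C : GClass.{u}) {G : Type u} [Group G] (g : G) : Prop :=
  ∃ (Q : Type u) (_ : Group Q) (σ : G →* Q), C Q ∧ σ g ≠ 1

lemma surv_list (hC : IsRootClass C) {G : Type u} [Group G] (L : List G)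
    (hL : ∀ g ∈ L, Surv C g) :
    ∃ (Q : Type u) (_ : Group Q) (σ : G →* Q), C Q ∧ ∀ g ∈ L, σ g ≠ 1 := by
  induction L with
  | nil =>
    obtain ⟨X, iX, hX, -⟩ := hC.1
    exact ⟨X, iX, 1, hX, by simp⟩
  | cons a L ih =>
    obtain ⟨Q, iQ, σ, hQ, hσ⟩ := ih (fun g hg => hL g (List.mem_cons_of_mem _ hg))
    obtain ⟨R, iR, τ, hR, hτ⟩ := hL a List.mem_cons_self
    refine ⟨Q × R, inferInstance, σ.prod τ, hC.prod hQ hR, ?_⟩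
    intro g hg h
    rw [MonoidHom.prod_apply, Prod.mk_eq_one] at h
    rcases List.mem_cons.1 hg with rfl | hg
    · exact hτ h.2
    · exact hσ g hg h.1

variable {A B : Type u} [Group A] [Group B]

/-- Value of a letter. -/
def lev : A ⊕ B → Coprod A B := Sum.elim Coprod.inl Coprod.inr

/-- Value of a word. -/
def wev (l : List (A ⊕ B)) : Coprod A B := (l.map lev).prod

@[simp] lemma wev_nil : wev ([] : List (A ⊕ B)) = 1 := rfl
@[simp] lemma wev_cons (s : A ⊕ B) (l : List (A ⊕ B)) : wev (s :: l) = lev s * wev l := by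
  simp [wev]

/-- Non-trivial letter. -/
def NT : A ⊕ B → Prop := Sum.elim (fun a => a ≠ 1) (fun b => b ≠ 1)

/-- Reduced word. -/
def Red (l : List (A ⊕ B)) : Prop :=
  l.IsChain (fun s t => s.isLeft ≠ t.isLeft) ∧ ∀ s ∈ l, NT s

lemma Red.tail {s : A ⊕ B} {l : List (A ⊕ B)} (h : Red (s :: l)) : Red l :=
  ⟨h.1.tail, fun t ht => h.2 t (List.mem_cons_of_mem _ ht)⟩

lemma Red.of_initial {l l' : List (A ⊕ B)} (h : Red l) (hp : l' <+: l) : Red l' := by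
  obtain ⟨r, rfl⟩ := hp
  exact ⟨h.1.left_of_append, fun t ht => h.2 t (List.mem_append_left _ ht)⟩

lemma exists_red_cons (s : A ⊕ B) (l : List (A ⊕ B)) (hl : Red l) :
    ∃ l', Red l' ∧ wev l' = lev s * wev l := by
  by_cases hs : NT s
  · cases l with
    | nil => exact ⟨[s], ⟨by simp, by simpa using hs⟩, by simp⟩
    | cons t l =>
      by_cases hst : s.isLeft = t.isLeft
      · have key : ∃ r : A ⊕ B, r.isLeft = t.isLeft ∧ lev r = lev s * lev t := by
          rcases s with a | b <;> rcases t with a' | b' <;> simp at hst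
          · exact ⟨Sum.inl (a * a'), rfl, by simp [lev]⟩
          · exact ⟨Sum.inr (b * b'), rfl, by simp [lev]⟩
        obtain ⟨r, hr, hre⟩ := key
        by_cases hrn : NT r
        · refine ⟨r :: l, ⟨?_, ?_⟩, by simp [hre, mul_assoc]⟩
          · have := hl.1
            rw [List.isChain_cons] at this ⊢
            rw [hr]
            exact this
          · intro x hx
            rcases List.mem_cons.1 hx with rfl | hx
            · exact hrn
            · exact hl.tail.2 x hx
        · have : lev r = 1 := by
            rcases r with a | b <;> simp [NT] at hrn <;> simp [lev, hrn]
          exact ⟨l, hl.tail, by rw [wev_cons, ← mul_assoc, ← hre, this, one_mul]⟩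
      · refine ⟨s :: t :: l, ⟨?_, ?_⟩, by simp⟩
        · exact List.isChain_cons_cons.2 ⟨hst, hl.1⟩
        · intro x hx
          rcases List.mem_cons.1 hx with rfl | hx
          · exact hs
          · exact hl.2 x hx
  · have : lev s = 1 := by
      rcases s with a | b <;> simp [NT] at hs <;> simp [lev, hs]
    exact ⟨l, hl, by simp [this]⟩

lemma exists_red (g : Coprod A B) : ∃ l, Red l ∧ wev l = g := by
  have h : ∀ l : List (A ⊕ B), ∃ l', Red l' ∧ wev l' = wev l := by
    intro l
    induction l with
    | nil => exact ⟨[], ⟨by simp, by simp⟩, rfl⟩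
    | cons s l ih =>
      obtain ⟨l', h, e⟩ := ih
      obtain ⟨l'', h', e'⟩ := exists_red_cons s l' h
      exact ⟨l'', h', by rw [e', e, wev_cons]⟩
  suffices ∃ l : List (A ⊕ B), wev l = g by
    obtain ⟨l, rfl⟩ := this
    exact h l
  induction g using Coprod.induction_on' with
  | one => exact ⟨[], rfl⟩
  | inl_mul a x ih =>
    obtain ⟨l, rfl⟩ := ih
    exact ⟨Sum.inl a :: l, by simp [lev]⟩
  | inr_mul a x ih =>
    obtain ⟨l, rfl⟩ := ih
    exact ⟨Sum.inr a :: l, by simp [lev]⟩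

/-- The twisted map into the wreath product. -/
def tw {X P : Type u} [Group X] [Group P] (φ : Coprod A B →* P) (h : P → X) :
    Coprod A B →* Wr X P :=
  Coprod.lift
    ((MulAut.conj (SemidirectProduct.inl h : Wr X P)).toMonoidHom.comp
      (SemidirectProduct.inr.comp (φ.comp Coprod.inl)))
    (SemidirectProduct.inr.comp (φ.comp Coprod.inr))

section tw
variable {X P : Type u} [Group X] [Group P] (φ : Coprod A B →* P) (h : P → X)

lemma tw_right (g : Coprod A B) : (tw φ h g).right = φ g := by
  have : (SemidirectProduct.rightHom).comp (tw φ h) = φ := by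
    apply Coprod.hom_ext <;> ext a <;> simp [tw]
  exact DFunLike.congr_fun this g

lemma tw_mul (g g' : Coprod A B) (q : P) :
    (tw φ h (g * g')).left q = (tw φ h g).left q * (tw φ h g').left ((φ g)⁻¹ * q) := by
  rw [map_mul, SemidirectProduct.mul_left, tw_right]
  rfl

lemma tw_inl (a : A) (q : P) :
    (tw φ h (lev (Sum.inl a))).left q = h q * (h ((φ (lev (Sum.inl a : A ⊕ B)))⁻¹ * q))⁻¹ := by
  simp [tw, lev]
  rfl

lemma tw_inr (b : B) (q : P) :
    (tw φ h (lev (Sum.inr b))).left q = 1 := by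
  simp [tw, lev]

lemma tw_word (t : P) (ht : ∀ q, q ≠ t → h q = 1) (l : List (A ⊕ B)) (q : P)
    (hq : ∀ l', l' <+: l → (φ (wev l'))⁻¹ * q ≠ t) : (tw φ h (wev l)).left q = 1 := by
  induction l generalizing q with
  | nil => simp
  | cons s l ih =>
    rw [wev_cons, tw_mul, ih, mul_one]
    · rcases s with a | b
      · rw [tw_inl, ht, ht]
        · simp
        · simpa using hq [Sum.inl a] (by simp)
        · simpa using hq [] (by simp)
      · exact tw_inr _ _ _ _
    · intro l' hl'
      have := hq (s :: l') (by simpa using hl')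
      simpa [mul_assoc] using this

end tw

lemma surv_red (hC : IsRootClass C) (h₁ : Residually C A) (h₂ : Residually C B) (n : ℕ) :
    ∀ l : List (A ⊕ B), l.length = n → Red l → l ≠ [] → Surv C (wev l) := by
  induction n using Nat.strong_induction_on with
  | _ n ih =>
  intro l hn hl hne
  match l, hn, hl, hne with
  | [s], _, hl, _ =>
    have hs := hl.2 s (by simp)
    rcases s with a | b
    · obtain ⟨Q, iQ, σ, hQ, -, hσ⟩ := h₁ a hs
      exact ⟨Q, iQ, Coprod.lift σ 1, hQ, by simpa [lev] using hσ⟩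
    · obtain ⟨Q, iQ, σ, hQ, -, hσ⟩ := h₂ b hs
      exact ⟨Q, iQ, Coprod.lift 1 σ, hQ, by simpa [lev] using hσ⟩
  | s :: s' :: l, hn, hl, _ =>
    classical
    simp only [List.length_cons] at hn
    obtain ⟨P, iP, φ, hP, hφ⟩ := surv_list hC
      (wev [s] :: (l.inits.map (fun l' => wev (s' :: l')))) (by
        intro g hg
        rcases List.mem_cons.1 hg with rfl | hg
        · exact ih 1 (by omega) [s] rfl (hl.of_initial (by simp)) (by simp)
        · obtain ⟨l', hl', rfl⟩ := List.mem_map.1 hg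
          rw [List.mem_inits] at hl'
          have := hl'.length_le
          exact ih (l'.length + 1) (by omega) (s' :: l') rfl
            (hl.tail.of_initial (by simpa using hl')) (by simp))
    have hs : φ (lev s) ≠ 1 := by simpa using hφ (wev [s]) (by simp)
    have hp : ∀ l', l' <+: l → φ (wev (s' :: l')) ≠ 1 := by
      intro l' hl'
      apply hφ
      refine List.mem_cons_of_mem _ (List.mem_map.2 ⟨l', ?_, rfl⟩)
      rwa [List.mem_inits]
    have hs' : φ (lev s') ≠ 1 := by simpa using hp [] (by simp)
    obtain ⟨X, iX, hX, hXn⟩ := hC.1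
    obtain ⟨x, hx⟩ := exists_ne (1 : X)
    let t : P := (φ (lev s))⁻¹
    let h : P → X := fun q => if q = t then x else 1
    have ht : ∀ q, q ≠ t → h q = 1 := fun q hq => if_neg hq
    have htt : h t = x := if_pos rfl
    refine ⟨Wr X P, inferInstance, tw φ h, hC.wr hX hP, ?_⟩
    intro hcon
    have hc : (tw φ h (wev (s :: s' :: l))).left 1 = 1 := by rw [hcon]; rfl
    rw [wev_cons, wev_cons, tw_mul, tw_mul, tw_word φ h t ht l, mul_one, mul_one] at hc
    · have hch := (List.isChain_cons_cons.1 hl.1).1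
      change _ * (tw φ h (lev s')).left t = 1 at hc
      rcases s with a | b <;> rcases s' with a' | b' <;> simp at hch
      · rw [tw_inr, tw_inl, mul_one, mul_one] at hc
        change h 1 * (h t)⁻¹ = 1 at hc
        rw [ht 1 (by simpa [t, eq_comm] using hs), htt] at hc
        simp at hc
        exact hx hc
      · rw [tw_inr, tw_inl, one_mul, htt, ht] at hc
        · simp at hc
          exact hx hc
        · simpa using hs'
    · intro l' hl' e
      apply hp l' hl'
      simp only [t, mul_one, ← mul_assoc] at e
      rw [mul_eq_right, ← mul_inv_rev, inv_eq_one, ← map_mul] at e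
      simpa using e

end helpers

/-- Proposition 3.3 (2): the free product of two residually `C`-groups is residually
a `C`-group, for a root class `C`. -/
theorem stmt_19 (C : GClass.{u}) (hC : IsRootClass C)
    (G₁ G₂ : Type u) [Group G₁] [Group G₂]
    (h₁ : Residually C G₁) (h₂ : Residually C G₂) :
    Residually C (Monoid.Coprod G₁ G₂) := by
  intro g hg
  obtain ⟨l, hl, rfl⟩ := exists_red g
  have hne : l ≠ [] := by
    rintro rfl
    exact hg rfl
  obtain ⟨Q, iQ, σ, hQ, hσ⟩ := surv_red hC h₁ h₂ _ l rfl hl hne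
  refine ⟨σ.range, inferInstance, σ.rangeRestrict, hC.2.2.1 Q _ hQ,
    σ.rangeRestrict_surjective, ?_⟩
  intro h
  exact hσ (congrArg Subtype.val h)
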